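/- Let a ∈ 𝔻 and let T : 𝒮^∞ → 𝒮^∞ be a surjective (not necessarily linear) isometry with respect to the norm ‖·‖_σ. Then there exist constants c₀, c₁, λ ∈ ℂ with |c₀| = |c₁| = |λ| = 1 and b ∈ 𝔻 such that, with ρ : 𝔻 → 𝔻 defined by ρ(z) = λ·(z − b)/(conj(b)·z − 1), one of the following four formulas holds for all f ∈ 𝒮^∞ and all z ∈ 𝔻: (i) T(f)(z) = T(0)(z) + c₀·f(a) + ∫_{[a,z]} c₁·f'(ρ(ζ)) dζ; (ii) T(f)(z) = T(0)(z) + c₀·conj(f(a)) + ∫_{[a,z]} c₁·f'(ρ(ζ)) dζ; (iii) T(f)(z) = T(0)(z) + c₀·f(a) + ∫_{[a,z]} c₁·conj(f'(conj(ρ(ζ)))) dζ; (iv) T(f)(z) = T(0)(z) + c₀·conj(f(a)) + ∫_{[a,z]} c₁·conj(f'(conj(ρ(ζ)))) dζ. -/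

import Mathlib

open Complex Metric Set

/-- `f` belongs to `𝒮^∞`: `f` is analytic on the open unit disc `𝔻` and its
derivative is bounded on `𝔻`. -/
def MemSInf (f : ℂ → ℂ) : Prop :=
  DifferentiableOn ℂ f (ball (0 : ℂ) 1) ∧
    ∃ M : ℝ, ∀ z ∈ ball (0 : ℂ) 1, ‖deriv f z‖ ≤ M

/-- The norm `‖f‖_σ = |f(a)| + sup_{w ∈ 𝔻} |f'(w)|`. -/
noncomputable def normSigmaA (a : ℂ) (f : ℂ → ℂ) : ℝ :=
  ‖f a‖ + ⨆ w : ball (0 : ℂ) 1, ‖deriv f (w : ℂ)‖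

/-- The line integral `∫_{[a,z]} g(ζ) dζ = ∫₀¹ g(a + t(z − a))·(z − a) dt`
along the straight segment from `a` to `z`. -/
noncomputable def lineInt (g : ℂ → ℂ) (a z : ℂ) : ℂ :=
  ∫ t in (0:ℝ)..1, g (a + (t : ℂ) * (z - a)) * (z - a)

/-!
The map `f ↦ (f(a), f')` identifies `𝒮^∞`, with the norm `‖·‖_σ`, with the `ℓ¹`-sum of `ℂ` and
`H^∞(𝔻)`, so by the Mazur–Ulam theorem `T - T(0)` becomes a real-linear isometry of that sum.
Neither summand has a non-trivial L-projection: `ℂ` is strictly convex, and in a uniform algebra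
without zero divisors a non-trivial L-projection that fixes `1` would be half of `1 + σ` for a
multiplicative isometry `σ`, which the norms of `(1 + i f)²` and `1 - f² + 2 f` exclude for
`σ(f) = -f`. As L-projections commute and the summands are not isometric, the isometry acts on each
summand separately. On `ℂ` it is a rotation, possibly composed with the conjugation.

A surjective real-linear isometry of uniform algebras is multiplicative up to the image of `1`: its
adjoint permutes the extreme points of the dual unit balls, and by Milman's theorem these are real
parts of unimodular multiples of characters. So an isometry `S` of `H^∞(𝔻)` with `S(1) = 1` is a
ring homomorphism, linear or conjugate-linear. Since `z - p` divides `g - g(p)`, up to conjugations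
`S` is the composition with `S(z)`. That function is an automorphism of the disc, hence given by the
Schwarz lemma.
-/

section Milman

variable {E : Type*} [AddCommGroup E] [Module ℝ E] [TopologicalSpace E] [IsTopologicalAddGroup E]
  [ContinuousSMul ℝ E]

lemma isCompact_convexJoin {s t : Set E} (hs : IsCompact s) (ht : IsCompact t) :
    IsCompact (convexJoin ℝ s t) := by
  have himage : convexJoin ℝ s t = (fun p : ℝ × E × E => (1 - p.1) • p.2.1 + p.1 • p.2.2) ''
      (Icc (0 : ℝ) 1 ×ˢ s ×ˢ t) := by
    ext x
    simp only [mem_convexJoin, segment_eq_image, mem_image, Prod.exists, mem_prod]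
    exact ⟨fun ⟨p, hp, q, hq, θ, hθ, h⟩ => ⟨θ, p, q, ⟨hθ, hp, hq⟩, h⟩,
      fun ⟨θ, p, q, ⟨hθ, hp, hq⟩, h⟩ => ⟨p, hp, q, hq, θ, hθ, h⟩⟩
  rw [himage]
  exact (isCompact_Icc.prod (hs.prod ht)).image (by fun_prop)

lemma isCompact_convexHull_biUnion {ι : Type*} (t : Finset ι) {A : ι → Set E}
    (hcomp : ∀ i, IsCompact (A i)) (hconv : ∀ i, Convex ℝ (A i)) :
    IsCompact (convexHull ℝ (⋃ i ∈ t, A i)) := by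
  classical
  induction t using Finset.induction with
  | empty => simp
  | insert i t _ ih =>
    rw [Finset.set_biUnion_insert]
    rcases (A i).eq_empty_or_nonempty with hi | hi
    · rwa [hi, empty_union]
    rcases (⋃ j ∈ t, A j).eq_empty_or_nonempty with ht | ht
    · rw [ht, union_empty, (hconv i).convexHull_eq]
      exact hcomp i
    rw [convexHull_union hi ht, (hconv i).convexHull_eq]
    exact isCompact_convexJoin (hcomp i) ih

variable [T2Space E]

lemma extremePoints_subset_biUnion {ι : Type*} (t : Finset ι) {A : ι → Set E} {C : Set E}
    (hC : Convex ℝ C) (hcomp : ∀ i, IsCompact (A i)) (hconv : ∀ i, Convex ℝ (A i))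
    (hAC : ∀ i, A i ⊆ C) (h : C ⊆ closure (convexHull ℝ (⋃ i ∈ t, A i))) :
    C.extremePoints ℝ ⊆ ⋃ i ∈ t, A i := by
  have hCeq : C = convexHull ℝ (⋃ i ∈ t, A i) :=
    (h.trans (isCompact_convexHull_biUnion t hcomp hconv).isClosed.closure_subset).antisymm
      (convexHull_min (iUnion₂_subset fun i _ => hAC i) hC)
  rw [hCeq]
  exact extremePoints_convexHull_subset

/-- Milman's partial converse to the Krein–Milman theorem. -/
theorem extremePoints_subset_of_subset_closure_convexHull [LocallyConvexSpace ℝ E] {K C : Set E}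
    (hC : IsCompact C) (hCconv : Convex ℝ C) (hK : IsClosed K) (hKC : K ⊆ C)
    (h : C ⊆ closure (convexHull ℝ K)) : C.extremePoints ℝ ⊆ K := by
  intro x hx
  by_contra hxK
  have hsep : ∀ y : E, ∃ l : StrongDual ℝ E, y ∈ K → l y < l x := fun y => by
    by_cases hy : y ∈ K
    · obtain ⟨l, hl⟩ := geometric_hahn_banach_point_point (ne_of_mem_of_not_mem hy hxK)
      exact ⟨l, fun _ => hl⟩
    · exact ⟨0, fun h => absurd h hy⟩
  choose l hl using hsep
  let H : E → Set E := fun y => {z | l y z ≤ (l y y + l y x) / 2}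
  have hHnhds : ∀ y ∈ K, H y ∈ nhds y := fun y hy =>
    Filter.mem_of_superset ((isOpen_Iio.preimage (l y).continuous).mem_nhds
      (show l y y < (l y y + l y x) / 2 by linarith [hl y hy]))
      fun z (hz : l y z < (l y y + l y x) / 2) => hz.le
  obtain ⟨t, htK, hcover⟩ := (hC.of_isClosed_subset hK hKC).elim_nhds_subcover H hHnhds
  have hKsub : K ⊆ ⋃ y ∈ t, C ∩ H y := fun z hz => by
    obtain ⟨y, hy, hzy⟩ := mem_iUnion₂.1 (hcover hz)
    exact mem_iUnion₂.2 ⟨y, hy, hKC hz, hzy⟩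
  have hsub := extremePoints_subset_biUnion (A := fun y => C ∩ H y) t hCconv
    (fun y => hC.inter_right (isClosed_le (l y).continuous continuous_const))
    (fun y => hCconv.inter (convex_halfSpace_le (l y).toLinearMap.isLinear _))
    (fun _ => inter_subset_left) (h.trans (closure_mono (convexHull_mono hKsub)))
  obtain ⟨y, hyt, -, hxy⟩ := mem_iUnion₂.1 (hsub hx)
  have hle : l y x ≤ (l y y + l y x) / 2 := hxy
  linarith [hl y (htK y hyt)]

end Milman

section DualBall

variable {E F : Type*} [NormedAddCommGroup E] [NormedSpace ℝ E] [NormedAddCommGroup F]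
  [NormedSpace ℝ F]

instance : LocallyConvexSpace ℝ (WeakDual ℝ E) :=
  inferInstanceAs (LocallyConvexSpace ℝ (WeakBilin (topDualPairing ℝ E)))

variable (E) in
/-- The closed unit ball of the dual of `E`, as a subset of the weak-* dual. -/
def dualUnitBall : Set (WeakDual ℝ E) := WeakDual.toStrongDual ⁻¹' closedBall 0 1

lemma mem_dualUnitBall {φ : WeakDual ℝ E} : φ ∈ dualUnitBall E ↔ ∀ g, φ g ≤ ‖g‖ := by
  rw [dualUnitBall, mem_preimage, mem_closedBall_zero_iff,
    ContinuousLinearMap.opNorm_le_iff zero_le_one]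
  simp only [one_mul]
  refine ⟨fun h g => (le_abs_self _).trans (h g), fun h g => abs_le.2 ⟨?_, h g⟩⟩
  have := h (-g)
  rw [norm_neg, map_neg] at this
  exact neg_le.1 this

lemma isCompact_dualUnitBall : IsCompact (dualUnitBall E) :=
  WeakDual.isCompact_closedBall (𝕜 := ℝ) 0 1

lemma convex_dualUnitBall : Convex ℝ (dualUnitBall E) :=
  (convex_closedBall _ _).linear_preimage (WeakDual.toStrongDual (𝕜 := ℝ) (E := E)).toLinearMap

lemma exists_mem_extremePoints_dualUnitBall_apply_eq_norm (g : E) :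
    ∃ φ ∈ (dualUnitBall E).extremePoints ℝ, φ g = ‖g‖ := by
  obtain ⟨φ₀, hφ₀, hφ₀g⟩ := exists_dual_vector'' ℝ g
  let face : Set (WeakDual ℝ E) := {φ ∈ dualUnitBall E | φ g = ‖g‖}
  have hface : IsExtreme ℝ (dualUnitBall E) face := by
    refine ⟨fun φ hφ => hφ.1, fun φ hφ ψ hψ χ hχ ⟨a, b, ha, hb, hab, h⟩ => ⟨hφ, ?_⟩⟩
    have hsum : a * φ g + b * ψ g = ‖g‖ := by rw [← hχ.2, ← h]; rfl
    have h1 := mem_dualUnitBall.1 hφ g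
    have h2 := mem_dualUnitBall.1 hψ g
    have hsplit : a * ‖g‖ + b * ‖g‖ = ‖g‖ := by rw [← add_mul, hab, one_mul]
    exact le_antisymm h1 (le_of_mul_le_mul_left
      (by linarith [mul_le_mul_of_nonneg_left h2 hb.le]) ha)
  have hcomp : IsCompact face := isCompact_dualUnitBall.inter_right
    (isClosed_eq (WeakDual.eval_continuous g) continuous_const)
  obtain ⟨φ, hφ⟩ := hcomp.extremePoints_nonempty
    ⟨StrongDual.toWeakDual φ₀, mem_closedBall_zero_iff.2 hφ₀, hφ₀g⟩
  exact ⟨φ, hface.extremePoints_subset_extremePoints hφ, hφ.1.2⟩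

lemma extremePoints_dualUnitBall_subset {K : Set (WeakDual ℝ E)} (hK : IsClosed K)
    (hKball : K ⊆ dualUnitBall E) (hnorming : ∀ g : E, ∃ φ ∈ K, φ g = ‖g‖) :
    (dualUnitBall E).extremePoints ℝ ⊆ K := by
  refine extremePoints_subset_of_subset_closure_convexHull isCompact_dualUnitBall
    convex_dualUnitBall hK hKball fun φ hφ => ?_
  by_contra hφK
  obtain ⟨l, r, hlr, hrφ⟩ := geometric_hahn_banach_closed_point
    (convex_convexHull ℝ K).closure isClosed_closure hφK
  obtain ⟨g, rfl⟩ := LinearMap.dualEmbedding_surjective (topDualPairing ℝ E) l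
  obtain ⟨ψ, hψK, hψ⟩ := hnorming g
  have hψr : ψ g < r := hlr ψ (subset_closure (subset_convexHull ℝ K hψK))
  have hφr : r < φ g := hrφ
  linarith [mem_dualUnitBall.1 hφ g]

lemma exists_mem_extremePoints_dualUnitBall_comp (R : E ≃ₗᵢ[ℝ] F) {φ : WeakDual ℝ F}
    (hφ : φ ∈ (dualUnitBall F).extremePoints ℝ) :
    ∃ ψ ∈ (dualUnitBall E).extremePoints ℝ, ∀ g, ψ g = φ (R g) := by
  let pullback : WeakDual ℝ F ≃ₗ[ℝ] WeakDual ℝ E :=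
    WeakDual.toStrongDual ≪≫ₗ
      (R.toContinuousLinearEquiv.symm.arrowCongr (.refl ℝ ℝ)).toLinearEquiv ≪≫ₗ
        WeakDual.toStrongDual.symm
  have hpull : ∀ ψ g, pullback ψ g = ψ (R g) := fun _ _ => rfl
  have hball : pullback '' dualUnitBall F = dualUnitBall E := by
    ext ψ
    obtain ⟨ψ, rfl⟩ := pullback.surjective ψ
    simp only [pullback.injective.mem_set_image, mem_dualUnitBall, hpull]
    simp only [R.surjective.forall, R.norm_map]
  rw [← hball, ← image_extremePoints]
  exact ⟨_, mem_image_of_mem _ hφ, hpull φ⟩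

end DualBall

section Circle

lemma exists_circle_mul_eq_norm (z : ℂ) : ∃ ω : Circle, ω * z = ‖z‖ := by
  refine ⟨Circle.exp (-arg z), ?_⟩
  nth_rw 2 [← norm_mul_exp_arg_mul_I z]
  rw [Circle.coe_exp, mul_left_comm, ← Complex.exp_add]
  simp

lemma eq_zero_of_forall_circle {α β γ : ℂ}
    (h : ∀ ω : Circle, (ω : ℂ) ^ 2 * α + β + starRingEnd ℂ ω ^ 2 * γ = 0) :
    α = 0 ∧ β = 0 ∧ γ = 0 := by
  obtain ⟨ζ, hζ⟩ : ∃ ζ : Circle, (ζ : ℂ) ^ 2 = I := by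
    refine ⟨Circle.exp (Real.pi / 4), ?_⟩
    rw [Circle.coe_exp, ← Complex.exp_nat_mul]
    convert exp_pi_div_two_mul_I using 2
    push_cast
    ring
  have hone : α + β + γ = 0 := by simpa using h 1
  have hI : -α + β - γ = 0 := by
    have := h (ζ ^ 2)
    rw [Circle.coe_pow, hζ] at this
    simpa [← sub_eq_add_neg] using this
  have hζ' : I * α + β - I * γ = 0 := by
    simpa only [hζ, ← map_pow, conj_I, neg_mul, ← sub_eq_add_neg] using h ζ
  have hβ : β = 0 := by linear_combination (hone + hI) / 2
  have hα : α = 0 := by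
    linear_combination (hone - hβ) / 2 - I / 2 * (hζ' - hβ) + (α - γ) / 2 * I_sq
  exact ⟨hα, hβ, by linear_combination hone - hα - hβ⟩

-- Comparing Fourier coefficients in `ω` separates `P` from `N`.
lemma eq_zero_and_mul_or_eq_zero_and_mul {M : Type*} [Monoid M] {P N : M → ℂ}
    (h : ∀ ω : Circle, ∃ (u : Circle) (m : M →* ℂ), ∀ g,
      u * m g = ω * P g + starRingEnd ℂ ω * N g) :
    ((∀ f, N f = 0) ∧ ∀ f g, P (f * g) * P 1 = P f * P g) ∨
      ((∀ f, P f = 0) ∧ ∀ f g, N (f * g) * N 1 = N f * N g) := by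
  have hconj : ∀ ω : Circle, (ω : ℂ) * starRingEnd ℂ ω = 1 := fun ω => by
    rw [mul_conj, normSq_eq_norm_sq, Circle.norm_coe]
    norm_num
  have hmul : ∀ f g, P (f * g) * P 1 = P f * P g ∧ N (f * g) * N 1 = N f * N g := fun f g => by
    obtain ⟨hP, -, hN⟩ := eq_zero_of_forall_circle (α := P (f * g) * P 1 - P f * P g)
      (β := P (f * g) * N 1 + N (f * g) * P 1 - P f * N g - N f * P g)
      (γ := N (f * g) * N 1 - N f * N g) fun ω => by
        obtain ⟨u, m, hum⟩ := h ω
        have hm : u * m (f * g) * (u * m 1) = u * m f * (u * m g) := by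
          rw [map_mul, map_one]
          ring
        rw [hum, hum, hum, hum] at hm
        linear_combination hm - (P (f * g) * N 1 + N (f * g) * P 1 - P f * N g - N f * P g) *
          hconj ω
    exact ⟨sub_eq_zero.1 hP, sub_eq_zero.1 hN⟩
  obtain ⟨hPN, -, -⟩ := eq_zero_of_forall_circle (α := P 1 * starRingEnd ℂ (N 1))
    (β := P 1 * starRingEnd ℂ (P 1) + N 1 * starRingEnd ℂ (N 1) - 1)
    (γ := starRingEnd ℂ (P 1) * N 1) fun ω => by
      obtain ⟨u, m, hum⟩ := h ω
      have hu := hum 1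
      rw [map_one, mul_one] at hu
      have hunit := hconj u
      rw [hu, map_add, map_mul, map_mul, conj_conj] at hunit
      linear_combination hunit -
        (P 1 * starRingEnd ℂ (P 1) + N 1 * starRingEnd ℂ (N 1)) * hconj ω
  rcases mul_eq_zero.1 hPN with hP | hN
  · refine .inr ⟨fun f => ?_, fun f g => (hmul f g).2⟩
    simpa [hP] using (hmul f f).1
  · refine .inl ⟨fun f => ?_, fun f g => (hmul f g).1⟩
    simpa [(map_eq_zero _).1 hN] using (hmul f f).2

end Circle

section UniformAlgebra

open WeakDual

/-- A uniform algebra: a commutative complex Banach algebra whose norm is power-multiplicative.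
By Gelfand theory these are, up to isometry, the closed unital subalgebras of the algebras `C(X)`
with `X` compact Hausdorff. -/
class UniformAlgebra (A : Type*) [NormedCommRing A] [NormedAlgebra ℂ A] : Prop
    extends CompleteSpace A where
  norm_pow_eq : ∀ (f : A) (n : ℕ), ‖f ^ n‖ = ‖f‖ ^ n

namespace UniformAlgebra

variable {A B : Type*} [NormedCommRing A] [NormedAlgebra ℂ A] [NormedCommRing B]
  [NormedAlgebra ℂ B]

/-- The real functional `f ↦ Re (ω m(f))` given by a rotated character. -/
noncomputable def reCharacter (ω : Circle) (m : characterSpace ℂ A) : WeakDual ℝ A :=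
  StrongDual.toWeakDual
    (reCLM.comp (((ω : ℂ) • (m : WeakDual ℂ A).toStrongDual).restrictScalars ℝ))

lemma reCharacter_apply (ω : Circle) (m : characterSpace ℂ A) (f : A) :
    reCharacter ω m f = (ω * m f).re := rfl

lemma continuous_reCharacter :
    Continuous fun p : Circle × characterSpace ℂ A => reCharacter p.1 p.2 := by
  refine WeakDual.continuous_of_continuous_eval fun f => ?_
  have hm : Continuous fun m : characterSpace ℂ A => m f :=
    (WeakDual.eval_continuous f).comp continuous_subtype_val
  exact continuous_re.comp
    ((continuous_subtype_val.comp continuous_fst).mul (hm.comp continuous_snd))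

/-- Multiplication by a unimodular scalar, as a real-linear isometry. -/
noncomputable def circleSMul (u : Circle) : A ≃ₗᵢ[ℝ] A where
  __ := DistribMulAction.toLinearEquiv ℝ A u
  norm_map' f := (norm_smul (u : ℂ) f).trans (by rw [Circle.norm_coe, one_mul])

/-- A boundary character is one all of whose rotations are extreme points of the dual unit ball. -/
def IsBoundary (m : characterSpace ℂ A) : Prop :=
  ∀ ω : Circle, reCharacter ω m ∈ (dualUnitBall A).extremePoints ℝ

lemma isBoundary_of_reCharacter_mem_extremePoints {ω : Circle} {m : characterSpace ℂ A}
    (h : reCharacter ω m ∈ (dualUnitBall A).extremePoints ℝ) : IsBoundary m := fun ω' => by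
  obtain ⟨ψ, hψ, hψeq⟩ := exists_mem_extremePoints_dualUnitBall_comp (circleSMul (ω⁻¹ * ω')) h
  convert hψ
  refine DFunLike.ext _ _ fun f => ?_
  have hsmul : m (circleSMul (ω⁻¹ * ω') f) = (ω⁻¹ * ω' : Circle) * m f := map_smul m (_ : ℂ) f
  rw [hψeq, reCharacter_apply, reCharacter_apply, hsmul, ← mul_assoc, ← Circle.coe_mul,
    mul_inv_cancel_left]

lemma map_mul_mul_map_one_of_re_eq_re_character {L : A → ℂ}
    (h : ∀ ω : Circle, ∃ (u : Circle) (m : characterSpace ℂ A), ∀ g,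
      (ω * L g).re = (u * m g).re) (f g : A) :
    L (f * g) * L 1 = L f * L g := by
  let P : A → ℂ := fun g => (L g - I * L (I • g)) / 2
  let N : A → ℂ := fun g => (starRingEnd ℂ (L g) - I * starRingEnd ℂ (L (I • g))) / 2
  have hL : ∀ g, L g = P g + starRingEnd ℂ (N g) := fun g => by
    simp only [P, N, map_div₀, map_sub, map_mul, conj_conj, conj_I, map_ofNat]
    ring
  have hPN : ∀ ω : Circle, ∃ (u : Circle) (m : A →* ℂ), ∀ g,
      u * m g = ω * P g + starRingEnd ℂ ω * N g := fun ω => by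
    obtain ⟨u, m, hum⟩ := h ω
    refine ⟨u, m, fun g => ?_⟩
    have hre : (ω * L g).re = (u * m g).re := hum g
    have him : (ω * L (I • g)).re = -(u * m g).im := by
      rw [hum, map_smul, smul_eq_mul, mul_left_comm, I_mul_re]
    calc (u * m g : ℂ) = (ω * L g).re - I * (ω * L (I • g)).re := by
          rw [hre, him]
          push_cast
          linear_combination -re_add_im (u * m g : ℂ)
      _ = ω * P g + starRingEnd ℂ ω * N g := by
          simp only [re_eq_add_conj, P, N, map_mul]
          ring
  rcases eq_zero_and_mul_or_eq_zero_and_mul hPN with ⟨hN, hP⟩ | ⟨hP, hN⟩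
  · simp only [hL, hN, map_zero, add_zero, hP]
  · simp only [hL, hP, zero_add, ← map_mul, hN]

variable [UniformAlgebra A]

instance : NormOneClass A := ⟨by simpa using norm_pow_eq (1 : A) 0⟩

lemma spectralRadius_eq_nnnorm (f : A) : spectralRadius ℂ f = ‖f‖₊ := by
  refine tendsto_nhds_unique (spectrum.pow_nnnorm_pow_one_div_tendsto_nhds_spectralRadius f)
    (tendsto_const_nhds.congr' ?_)
  filter_upwards [Filter.eventually_gt_atTop 0] with n hn
  have hpow : ‖f ^ n‖₊ = ‖f‖₊ ^ n := NNReal.eq (norm_pow_eq f n)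
  rw [hpow, ENNReal.coe_pow, one_div, ENNReal.pow_rpow_inv_natCast hn.ne']

lemma exists_character_norm_apply_eq (f : A) : ∃ m : characterSpace ℂ A, ‖m f‖ = ‖f‖ := by
  have : Nontrivial A := NormOneClass.nontrivial
  obtain ⟨z, hz, hzf⟩ := spectrum.exists_nnnorm_eq_spectralRadius f
  obtain ⟨m, rfl⟩ := CharacterSpace.mem_spectrum_iff_exists.1 hz
  rw [spectralRadius_eq_nnnorm] at hzf
  exact ⟨m, congrArg NNReal.toReal (ENNReal.coe_injective hzf)⟩

lemma eq_zero_of_forall_character {f : A} (h : ∀ m : characterSpace ℂ A, m f = 0) : f = 0 := by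
  obtain ⟨m, hm⟩ := exists_character_norm_apply_eq f
  rwa [h, norm_zero, eq_comm, norm_eq_zero] at hm

lemma reCharacter_mem_dualUnitBall (ω : Circle) (m : characterSpace ℂ A) :
    reCharacter ω m ∈ dualUnitBall A := by
  refine mem_dualUnitBall.2 fun f => ?_
  calc (ω * m f).re ≤ ‖ω * m f‖ := re_le_norm _
    _ = ‖m f‖ := by rw [norm_mul, Circle.norm_coe, one_mul]
    _ ≤ ‖f‖ := AlgHom.norm_apply_le_self m f

lemma exists_reCharacter_eq {φ : WeakDual ℝ A} (hφ : φ ∈ (dualUnitBall A).extremePoints ℝ) :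
    ∃ (ω : Circle) (m : characterSpace ℂ A), reCharacter ω m = φ := by
  have hsub := extremePoints_dualUnitBall_subset
    (isCompact_range (continuous_reCharacter (A := A))).isClosed
    (range_subset_iff.2 fun p => reCharacter_mem_dualUnitBall p.1 p.2) fun f => by
      obtain ⟨m, hm⟩ := exists_character_norm_apply_eq f
      obtain ⟨ω, hω⟩ := exists_circle_mul_eq_norm (m f)
      exact ⟨_, mem_range_self (ω, m), by rw [reCharacter_apply, hω, ofReal_re, hm]⟩
  obtain ⟨p, hp⟩ := hsub hφ
  exact ⟨p.1, p.2, hp⟩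

lemma eq_of_forall_isBoundary {f g : A}
    (h : ∀ m : characterSpace ℂ A, IsBoundary m → m f = m g) : f = g := by
  obtain ⟨φ, hφ, hφf⟩ := exists_mem_extremePoints_dualUnitBall_apply_eq_norm (f - g)
  obtain ⟨ω, m, rfl⟩ := exists_reCharacter_eq hφ
  rw [reCharacter_apply, map_sub, h m (isBoundary_of_reCharacter_mem_extremePoints hφ),
    sub_self, mul_zero, zero_re, eq_comm, norm_eq_zero] at hφf
  exact sub_eq_zero.1 hφf

lemma IsBoundary.exists_re_mul_comp_eq {m : characterSpace ℂ B} (hm : IsBoundary m)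
    (R : A ≃ₗᵢ[ℝ] B) (ω : Circle) :
    ∃ (u : Circle) (m' : characterSpace ℂ A), ∀ f, (ω * m (R f)).re = (u * m' f).re := by
  obtain ⟨ψ, hψ, hψeq⟩ := exists_mem_extremePoints_dualUnitBall_comp R (hm ω)
  obtain ⟨u, m', rfl⟩ := exists_reCharacter_eq hψ
  exact ⟨u, m', fun f => (hψeq f).symm⟩

variable [UniformAlgebra B] (R : A ≃ₗᵢ[ℝ] B)

/-- A real-linear version of Nagasawa's theorem. -/
theorem map_mul_mul_map_one (f g : A) : R (f * g) * R 1 = R f * R g := by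
  refine eq_of_forall_isBoundary fun m hm => ?_
  rw [map_mul m, map_mul m]
  exact map_mul_mul_map_one_of_re_eq_re_character (L := fun g => m (R g))
    (hm.exists_re_mul_comp_eq R) f g

lemma map_mul_symm_one_mul_map_one : R (R.symm 1 * R.symm 1) * R 1 = 1 := by
  rw [map_mul_mul_map_one, R.apply_symm_apply, one_mul]

lemma norm_character_map_one (m : characterSpace ℂ B) : ‖m (R 1)‖ = 1 := by
  have hle : ∀ f : A, ‖m (R f)‖ ≤ ‖f‖ := fun f =>
    (AlgHom.norm_apply_le_self m (R f)).trans_eq (R.norm_map f)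
  have hone : ‖m (R 1)‖ ≤ 1 := (hle 1).trans_eq norm_one
  have hsq : ‖m (R (R.symm 1 * R.symm 1))‖ ≤ 1 := (hle _).trans <| by
    simpa using norm_mul_le (R.symm 1) (R.symm 1)
  have hmul : ‖m (R (R.symm 1 * R.symm 1))‖ * ‖m (R 1)‖ = 1 := by
    rw [← norm_mul, ← map_mul m, map_mul_symm_one_mul_map_one, map_one m, norm_one]
  nlinarith [norm_nonneg (m (R 1))]

lemma isUnit_map_one : IsUnit (R 1) :=
  .of_mul_eq_one_right _ (map_mul_symm_one_mul_map_one R)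

lemma isUnit_map {f : A} (hf : IsUnit f) : IsUnit (R f) := by
  obtain ⟨g, hfg⟩ := hf.exists_right_inv
  have hmul := map_mul_mul_map_one R f g
  rw [hfg] at hmul
  exact isUnit_of_mul_isUnit_left (hmul ▸ (isUnit_map_one R).mul (isUnit_map_one R))

section Unital

variable {R} (hR : R 1 = 1)
include hR

lemma map_mul_of_map_one_eq_one (f g : A) : R (f * g) = R f * R g := by
  have hmul := map_mul_mul_map_one R f g
  rwa [hR, mul_one] at hmul

variable [NoZeroDivisors B]

lemma map_I_smul_one_eq_or : R (I • 1) = I • 1 ∨ R (I • 1) = -(I • 1) := by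
  refine mul_self_eq_mul_self_iff.1 ?_
  rw [← map_mul_of_map_one_eq_one hR]
  simp [smul_smul, hR]

lemma exists_algHom_map_smul : ∃ τ : ℂ →ₐ[ℝ] ℂ, ∀ (c : ℂ) (f : A), R (c • f) = τ c • R f := by
  have hdecomp : ∀ (c : ℂ) f, R (c • f) = c.re • R f + c.im • (R (I • 1) * R f) := fun c f => by
    rw [← map_mul_of_map_one_eq_one hR, smul_one_mul, ← map_smul, ← map_smul, ← map_add,
      ← Complex.coe_smul, ← Complex.coe_smul c.im, smul_smul, ← add_smul, re_add_im]
  rcases map_I_smul_one_eq_or hR with hI | hI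
  · refine ⟨AlgHom.id ℝ ℂ, fun c f => ?_⟩
    rw [hdecomp, hI, smul_one_mul, ← Complex.coe_smul, ← Complex.coe_smul c.im, smul_smul,
      ← add_smul, re_add_im, AlgHom.id_apply]
  · refine ⟨conjAe, fun c f => ?_⟩
    rw [hdecomp, hI, neg_mul, smul_one_mul, ← neg_smul, ← Complex.coe_smul,
      ← Complex.coe_smul c.im, smul_smul, ← add_smul]
    congr 1
    apply Complex.ext <;> simp

end Unital

end UniformAlgebra

end UniformAlgebra

section LProjection

open WithLp

variable {E E' F F' : Type*} [NormedAddCommGroup E] [NormedSpace ℝ E] [NormedAddCommGroup E']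
  [NormedSpace ℝ E'] [NormedAddCommGroup F] [NormedSpace ℝ F] [NormedAddCommGroup F']
  [NormedSpace ℝ F']

variable (E) in
/-- A real normed space is L-irreducible if it is not an `ℓ¹`-sum of two proper subspaces: its only
L-projections are `0` and `1`. -/
def LIrreducible : Prop := ∀ q : Module.End ℝ E, IsLprojection E q → q = 0 ∨ q = 1

lemma apply_apply_of_isLprojection {q : Module.End ℝ E} (hq : IsLprojection E q) (x : E) :
    q (q x) = q x :=
  DFunLike.congr_fun hq.proj.eq x

lemma norm_add_of_isLprojection {q : Module.End ℝ E} (hq : IsLprojection E q) {a b : E}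
    (ha : q a = a) (hb : q b = 0) : ‖a + b‖ = ‖a‖ + ‖b‖ := by
  have h := hq.Lnorm (a + b)
  simp only [Module.End.smul_def, LinearMap.sub_apply, Module.End.one_apply, map_add, ha, hb] at h
  rwa [add_zero, sub_self, zero_add, sub_zero] at h

lemma LIrreducible.of_strictConvexSpace [StrictConvexSpace ℝ E] : LIrreducible E := fun q hq => by
  by_contra! hne
  obtain ⟨x, hx⟩ := DFunLike.ne_iff.1 hne.1
  obtain ⟨y, hy⟩ := DFunLike.ne_iff.1 hne.2
  have hidem := apply_apply_of_isLprojection hq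
  have hker : q (y - q y) = 0 := by rw [map_sub, hidem, sub_self]
  have hray := sameRay_iff_norm_add.2 (norm_add_of_isLprojection hq (hidem x) hker)
  obtain ⟨r, s, hr, -, hrs⟩ := hray.exists_pos hx (sub_ne_zero.2 (Ne.symm hy))
  have hzero := congrArg q hrs
  rw [map_smul, map_smul, hidem, hker, smul_zero] at hzero
  exact (smul_ne_zero hr.ne' hx) hzero

lemma isLprojection_conj (U : E ≃ₗᵢ[ℝ] F) {q : Module.End ℝ E} (hq : IsLprojection E q) :
    IsLprojection F (U.toLinearEquiv.conj q) where
  proj := hq.proj.map (U.toLinearEquiv.conjRingEquiv)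
  Lnorm y := by
    have := hq.Lnorm (U.symm y)
    rw [← U.norm_map (q • _), ← U.norm_map ((1 - q) • _), U.symm.norm_map] at this
    simpa using this

variable (E F) in
/-- The projection of `E ⊕₁ F` onto `E`. -/
noncomputable def projFst : Module.End ℝ (WithLp 1 (E × F)) :=
  (WithLp.linearEquiv 1 ℝ (E × F)).symm.conj (LinearMap.inl ℝ E F ∘ₗ LinearMap.fst ℝ E F)

lemma projFst_apply (p : WithLp 1 (E × F)) : projFst E F p = toLp 1 (p.fst, 0) := rfl

lemma one_sub_projFst_apply (p : WithLp 1 (E × F)) :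
    (1 - projFst E F) p = toLp 1 (0, p.snd) :=
  ofLp_injective 1 (Prod.ext (by simp [projFst_apply]) (by simp [projFst_apply]))

lemma isLprojection_projFst : IsLprojection (WithLp 1 (E × F)) (projFst E F) where
  proj := rfl
  Lnorm p := by
    rw [Module.End.smul_def, Module.End.smul_def, one_sub_projFst_apply, projFst_apply,
      norm_toLp_fst, norm_toLp_snd, prod_norm_eq_of_L1]

lemma isLprojection_apply_toLp_inl {Q : Module.End ℝ (WithLp 1 (E × F))}
    (hQ : IsLprojection (WithLp 1 (E × F)) Q) (x : E) :
    Q (toLp 1 (x, 0)) = toLp 1 ((Q (toLp 1 (x, 0))).fst, 0) :=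
  congrArg (· (toLp 1 (x, 0))) (hQ.commute isLprojection_projFst).eq

lemma LIrreducible.apply_toLp_inl (hE : LIrreducible E) {Q : Module.End ℝ (WithLp 1 (E × F))}
    (hQ : IsLprojection (WithLp 1 (E × F)) Q) :
    (∀ x, Q (toLp 1 (x, 0)) = 0) ∨ ∀ x, Q (toLp 1 (x, 0)) = toLp 1 (x, 0) := by
  let q : Module.End ℝ E := LinearMap.fst ℝ E F ∘ₗ (WithLp.linearEquiv 1 ℝ (E × F)).toLinearMap ∘ₗ
    Q ∘ₗ (WithLp.linearEquiv 1 ℝ (E × F)).symm.toLinearMap ∘ₗ LinearMap.inl ℝ E F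
  have hQq : ∀ x, Q (toLp 1 (x, 0)) = toLp 1 (q x, 0) := isLprojection_apply_toLp_inl hQ
  have hq : IsLprojection E q := by
    refine ⟨LinearMap.ext fun x => ?_, fun x => ?_⟩
    · have := congrArg (fun R => (R (toLp 1 (x, 0))).fst) hQ.proj.eq
      simpa [hQq] using this
    · have := hQ.Lnorm (toLp 1 (x, 0))
      have hsub : (1 - Q) (toLp 1 (x, 0)) = toLp 1 ((1 - q) x, 0) := by
        simp [hQq, ← toLp_sub]
      rwa [Module.End.smul_def, Module.End.smul_def, hsub, hQq, norm_toLp_fst, norm_toLp_fst,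
        norm_toLp_fst] at this
  rcases hE q hq with h | h
  · exact .inl fun x => by simp [hQq, h]
  · exact .inr fun x => by simp [hQq, h]

lemma LIrreducible.apply_toLp_inr (hF : LIrreducible F) {Q : Module.End ℝ (WithLp 1 (E × F))}
    (hQ : IsLprojection (WithLp 1 (E × F)) Q) :
    (∀ y, Q (toLp 1 (0, y)) = 0) ∨ ∀ y, Q (toLp 1 (0, y)) = toLp 1 (0, y) := by
  let swap := LinearIsometryEquiv.withLpProdComm 1 ℝ E F
  have hconj : ∀ y, swap.toLinearEquiv.conj Q (toLp 1 (y, 0)) = swap (Q (toLp 1 (0, y))) :=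
    fun y => rfl
  rcases hF.apply_toLp_inl (isLprojection_conj swap hQ) with h | h
  · exact .inl fun y => swap.map_eq_zero_iff.1 ((hconj y).symm.trans (h y))
  · exact .inr fun y => swap.injective ((hconj y).symm.trans (h y))

lemma exists_map_toLp_inl (U : WithLp 1 (E × F) ≃ₗᵢ[ℝ] WithLp 1 (E' × F'))
    (hU : ∀ p, (U p).snd = 0 ↔ p.snd = 0) :
    ∃ R : E ≃ₗᵢ[ℝ] E', ∀ x, U (toLp 1 (x, 0)) = toLp 1 (R x, 0) := by
  let R₀ : E →ₗ[ℝ] E' := LinearMap.fst ℝ E' F' ∘ₗ (WithLp.linearEquiv 1 ℝ (E' × F')).toLinearMap ∘ₗ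
    U.toLinearEquiv.toLinearMap ∘ₗ (WithLp.linearEquiv 1 ℝ (E × F)).symm.toLinearMap ∘ₗ
    LinearMap.inl ℝ E F
  have hR₀ : ∀ x, U (toLp 1 (x, 0)) = toLp 1 (R₀ x, 0) := fun x =>
    ofLp_injective 1 (Prod.ext rfl ((hU _).2 rfl))
  let R : E →ₗᵢ[ℝ] E' := ⟨R₀, fun x => by
    have hnorm := U.norm_map (toLp 1 (x, 0))
    rwa [hR₀, norm_toLp_fst, norm_toLp_fst] at hnorm⟩
  have hsurj : Function.Surjective R := fun x' => by
    obtain ⟨p, hp⟩ := U.surjective (toLp 1 (x', 0))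
    have hsnd : p.snd = 0 := (hU p).1 (congrArg WithLp.snd hp)
    have hpeq : p = toLp 1 (p.fst, 0) := ofLp_injective 1 (Prod.ext rfl hsnd)
    refine ⟨p.fst, ?_⟩
    rw [hpeq, hR₀] at hp
    exact congrArg WithLp.fst hp
  exact ⟨LinearIsometryEquiv.ofSurjective R hsurj, hR₀⟩

lemma exists_map_toLp_inr (U : WithLp 1 (E × F) ≃ₗᵢ[ℝ] WithLp 1 (E' × F'))
    (hU : ∀ p, (U p).fst = 0 ↔ p.fst = 0) :
    ∃ R : F ≃ₗᵢ[ℝ] F', ∀ y, U (toLp 1 (0, y)) = toLp 1 (0, R y) := by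
  let swap := LinearIsometryEquiv.withLpProdComm 1 ℝ E' F'
  obtain ⟨R, hR⟩ := exists_map_toLp_inl
    ((LinearIsometryEquiv.withLpProdComm 1 ℝ F E).trans (U.trans swap)) fun p => hU _
  exact ⟨R, fun y => swap.injective (hR y)⟩

lemma LIrreducible.isLprojection_prod (hE : LIrreducible E) (hF : LIrreducible F)
    {Q : Module.End ℝ (WithLp 1 (E × F))} (hQ : IsLprojection (WithLp 1 (E × F)) Q) :
    Q = 0 ∨ Q = 1 ∨ Q = projFst E F ∨ Q = 1 - projFst E F := by
  have hdecomp : ∀ p : WithLp 1 (E × F), Q p = Q (toLp 1 (p.fst, 0)) + Q (toLp 1 (0, p.snd)) :=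
    fun p => by
      rw [← map_add, ← toLp_add, Prod.mk_add_mk, add_zero, zero_add]
      rfl
  rcases hE.apply_toLp_inl hQ with hE₀ | hE₁ <;> rcases hF.apply_toLp_inr hQ with hF₀ | hF₁
  · exact .inl (LinearMap.ext fun p => by rw [hdecomp, hE₀, hF₀, add_zero, LinearMap.zero_apply])
  · refine .inr (.inr (.inr (LinearMap.ext fun p => ?_)))
    rw [hdecomp, hE₀, hF₁, zero_add, one_sub_projFst_apply]
  · refine .inr (.inr (.inl (LinearMap.ext fun p => ?_)))
    rw [hdecomp, hE₁, hF₀, add_zero, projFst_apply]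
  · refine .inr (.inl (LinearMap.ext fun p => ?_))
    rw [hdecomp, hE₁, hF₁, ← toLp_add, Prod.mk_add_mk, add_zero, zero_add]
    rfl

lemma projFst_ne_zero [Nontrivial E] : projFst E F ≠ 0 := fun h => by
  obtain ⟨x, hx⟩ := exists_ne (0 : E)
  exact hx (congrArg (fun P => (P (toLp 1 (x, 0))).fst) h)

lemma projFst_ne_one [Nontrivial F] : projFst E F ≠ 1 := fun h => by
  obtain ⟨y, hy⟩ := exists_ne (0 : F)
  exact hy (congrArg (fun P => (P (toLp 1 (0, y))).snd) h).symm

lemma fst_eq_zero_iff {p : WithLp 1 (E × F)} : p.fst = 0 ↔ projFst E F p = 0 := by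
  rw [projFst_apply, toLp_eq_zero, Prod.mk_eq_zero, and_iff_left rfl]

lemma snd_eq_zero_iff {p : WithLp 1 (E × F)} : p.snd = 0 ↔ (1 - projFst E F) p = 0 := by
  rw [one_sub_projFst_apply, toLp_eq_zero, Prod.mk_eq_zero, and_iff_right rfl]

theorem LIrreducible.exists_map_toLp_eq [Nontrivial E] [Nontrivial F] (hE : LIrreducible E)
    (hF : LIrreducible F) (hEF : IsEmpty (E ≃ₗᵢ[ℝ] F))
    (U : WithLp 1 (E × F) ≃ₗᵢ[ℝ] WithLp 1 (E × F)) :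
    ∃ (V : E ≃ₗᵢ[ℝ] E) (W : F ≃ₗᵢ[ℝ] F), ∀ x y, U (toLp 1 (x, y)) = toLp 1 (V x, W y) := by
  let conj := U.toLinearEquiv.conjRingEquiv
  have hconj : ∀ P p, conj P (U p) = U (P p) := fun P p =>
    congrArg (U ∘ P) (U.symm_apply_apply p)
  have hker : ∀ P p, conj P (U p) = 0 ↔ P p = 0 := fun P p => by
    rw [hconj, map_eq_zero_iff _ U.injective]
  rcases hE.isLprojection_prod hF (isLprojection_conj U isLprojection_projFst) with
    h | h | h | h
  · exact absurd (conj.map_eq_zero_iff.1 h) projFst_ne_zero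
  · exact absurd (conj.map_eq_one_iff.1 h) projFst_ne_one
  · replace h : conj (projFst E F) = projFst E F := h
    obtain ⟨V, hV⟩ := exists_map_toLp_inl U fun p => by
      rw [snd_eq_zero_iff, snd_eq_zero_iff, ← hker _ p, map_sub, map_one, h]
    obtain ⟨W, hW⟩ := exists_map_toLp_inr U fun p => by
      rw [fst_eq_zero_iff, fst_eq_zero_iff, ← hker _ p, h]
    refine ⟨V, W, fun x y => ?_⟩
    have hsplit : toLp 1 (x, y) = toLp 1 (x, 0) + toLp 1 (0, y) := by
      rw [← toLp_add, Prod.mk_add_mk, add_zero, zero_add]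
    rw [hsplit, map_add, hV, hW, ← toLp_add, Prod.mk_add_mk, add_zero, zero_add]
  · replace h : conj (1 - projFst E F) = projFst E F := by
      rw [map_sub, map_one, show conj (projFst E F) = _ from h, sub_sub_cancel]
    obtain ⟨R, -⟩ := exists_map_toLp_inl
      (U.trans (LinearIsometryEquiv.withLpProdComm 1 ℝ E F)) fun p =>
        show (U p).fst = 0 ↔ p.snd = 0 by rw [fst_eq_zero_iff, snd_eq_zero_iff, ← hker _ p, h]
    exact isEmptyElim R

end LProjection

section LProjectionUniformAlgebra

section Reflection

variable {E : Type*} [NormedAddCommGroup E] [NormedSpace ℝ E] {q : Module.End ℝ E}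
  (hq : IsLprojection E q)

/-- The reflection `2q - 1` in the range of an L-projection `q`. -/
noncomputable def lReflection : E ≃ₗᵢ[ℝ] E where
  __ := LinearEquiv.ofInvolutive (q - (1 - q)) fun x => by
    simp [apply_apply_of_isLprojection hq]
  norm_map' x := by
    have hidem := apply_apply_of_isLprojection hq x
    have hker : q (-(x - q x)) = 0 := by rw [map_neg, map_sub, hidem, sub_self, neg_zero]
    calc ‖q x - (x - q x)‖ = ‖q x + -(x - q x)‖ := by rw [sub_eq_add_neg]
      _ = ‖q x‖ + ‖x - q x‖ := by rw [norm_add_of_isLprojection hq hidem hker, norm_neg]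
      _ = ‖x‖ := (hq.Lnorm x).symm

lemma lReflection_apply (x : E) : lReflection hq x = q x - (x - q x) := rfl

lemma lReflection_eq_self_iff {x : E} : lReflection hq x = x ↔ q x = x := by
  rw [lReflection_apply, sub_sub_eq_add_sub, ← two_smul ℝ, sub_eq_iff_eq_add, ← two_smul ℝ]
  exact smul_right_inj two_ne_zero

lemma lReflection_eq_neg_iff {x : E} : lReflection hq x = -x ↔ q x = 0 := by
  rw [lReflection_apply, sub_sub_eq_add_sub, ← two_smul ℝ, sub_eq_iff_eq_add, neg_add_cancel]
  exact smul_eq_zero_iff_right two_ne_zero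

end Reflection

lemma sq_eq_one_of_norm_add_one_add_norm_sub_one_le {v : ℂ} (hv : ‖v‖ = 1)
    (h : ‖v + 1‖ + ‖v - 1‖ ≤ 2) : v * v = 1 := by
  have hpar := parallelogram_law_with_norm ℝ v 1
  rw [hv, norm_one] at hpar
  have hprod : ‖(v + 1) * (v - 1)‖ ≤ 0 := by
    rw [norm_mul]
    nlinarith [norm_nonneg (v + 1), norm_nonneg (v - 1)]
  linear_combination norm_le_zero_iff.1 hprod

lemma norm_one_add_two_mul_sub_sq_le {v : ℂ} (hv : ‖v‖ ≤ 1) : ‖1 - v * v + 2 * v‖ ≤ 3 := by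
  have hsq : ‖v‖ ^ 2 ≤ 1 := pow_le_one₀ (norm_nonneg v) hv
  refine le_of_sq_le_sq ?_ (by norm_num)
  rw [Complex.sq_norm, normSq_apply] at hsq ⊢
  simp only [add_re, sub_re, one_re, mul_re, re_ofNat, im_ofNat, add_im, sub_im, one_im, mul_im]
  nlinarith [sq_nonneg (2 * v.re - (1 - (v.re * v.re + v.im * v.im))),
    mul_self_nonneg v.re, mul_self_nonneg v.im]

namespace UniformAlgebra

open WeakDual

variable {A : Type*} [NormedCommRing A] [NormedAlgebra ℂ A] [UniformAlgebra A] [NoZeroDivisors A]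
  {q : Module.End ℝ A} (hq : IsLprojection A q)
include hq

lemma isLprojection_apply_one : q 1 = 0 ∨ q 1 = 1 := by
  let u := lReflection hq 1
  have hsum : ‖u + 1‖ + ‖u - 1‖ = 2 := by
    have hadd : u + 1 = (2 : ℝ) • q 1 := by
      rw [two_smul]
      simp only [u, lReflection_apply]
      abel
    have hsub : u - 1 = -((2 : ℝ) • (1 - q 1)) := by
      rw [two_smul]
      simp only [u, lReflection_apply]
      abel
    have hone : ‖(1 : A)‖ = ‖q 1‖ + ‖1 - q 1‖ := hq.Lnorm 1
    rw [hadd, hsub, norm_neg, norm_smul, norm_smul, ← mul_add, ← hone, norm_one]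
    norm_num
  have hu : u * u - 1 = 0 := eq_zero_of_forall_character fun m => by
    rw [map_sub, map_mul, map_one, sub_eq_zero]
    refine sq_eq_one_of_norm_add_one_add_norm_sub_one_le (norm_character_map_one _ m) ?_
    rw [← hsum, ← map_one m, ← map_add, ← map_sub]
    exact add_le_add (AlgHom.norm_apply_le_self m _) (AlgHom.norm_apply_le_self m _)
  rcases mul_self_eq_one_iff.1 (sub_eq_zero.1 hu) with h | h
  · exact .inr ((lReflection_eq_self_iff hq).1 h)
  · exact .inl ((lReflection_eq_neg_iff hq).1 h)

variable (hq₁ : q 1 = 1)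
include hq₁

lemma isLprojection_apply_I_smul_one : q (I • 1) = I • 1 := by
  have hσ₁ := (lReflection_eq_self_iff hq).2 hq₁
  rcases map_I_smul_one_eq_or hσ₁ with h | h
  · exact (lReflection_eq_self_iff hq).1 h
  · have hnorm := norm_add_of_isLprojection hq hq₁ ((lReflection_eq_neg_iff hq).1 h)
    have hsmul : (1 : A) + I • 1 = (1 + I) • (1 : A) := by rw [add_smul, one_smul]
    rw [hsmul, norm_smul, norm_smul, norm_one, norm_I] at hnorm
    have hsq : ‖1 + I‖ ^ 2 = 2 := by
      rw [Complex.sq_norm, normSq_apply]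
      norm_num
    rw [mul_one] at hnorm
    rw [hnorm] at hsq
    norm_num at hsq

lemma norm_ne_one_of_isLprojection_apply_eq_zero {f : A} (hf : q f = 0) : ‖f‖ ≠ 1 := fun hf₁ => by
  have hσ₁ := (lReflection_eq_self_iff hq).2 hq₁
  have hσf := (lReflection_eq_neg_iff hq).2 hf
  have hσI := (lReflection_eq_self_iff hq).2 (isLprojection_apply_I_smul_one hq hq₁)
  have hIf : q (I • f) = 0 := by
    rw [← lReflection_eq_neg_iff hq, ← smul_one_mul, map_mul_of_map_one_eq_one hσ₁, hσf, hσI,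
      mul_neg]
  have hff : q (1 - f * f) = 1 - f * f := by
    rw [← lReflection_eq_self_iff hq, map_sub, map_mul_of_map_one_eq_one hσ₁, hσf, hσ₁,
      neg_mul_neg]
  have hnorm : ‖1 - f * f‖ = 2 := by
    have hsq : (1 + I • f) ^ 2 = (1 - f * f) + (2 : ℝ) • I • f := by
      rw [add_sq, smul_pow, I_sq, two_smul]
      simp only [one_pow, mul_one, neg_smul, one_smul, sq f]
      ring
    have hpow := norm_pow_eq (1 + I • f) 2
    rw [hsq, norm_add_of_isLprojection hq hff (by rw [map_smul, hIf, smul_zero]),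
      norm_add_of_isLprojection hq hq₁ hIf, norm_smul, norm_smul, norm_I, norm_one, hf₁] at hpow
    norm_num at hpow
    linarith
  have hfour : ‖1 - f * f + (2 : ℂ) • f‖ = 4 := by
    rw [norm_add_of_isLprojection hq hff, hnorm, norm_smul, hf₁]
    · norm_num
    · rw [two_smul, map_add, hf, add_zero]
  obtain ⟨m, hm⟩ := exists_character_norm_apply_eq (1 - f * f + (2 : ℂ) • f)
  rw [hfour, map_add, map_sub, map_one, map_mul, map_smul, smul_eq_mul] at hm
  have := norm_one_add_two_mul_sub_sq_le ((AlgHom.norm_apply_le_self m f).trans hf₁.le)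
  linarith

lemma isLprojection_eq_one : q = 1 := by
  refine LinearMap.ext fun x => (sub_eq_zero.1 ?_).symm
  by_contra hne
  have hker : q (x - q x) = 0 := by
    rw [map_sub, apply_apply_of_isLprojection hq, sub_self]
  refine norm_ne_one_of_isLprojection_apply_eq_zero hq hq₁
    (f := (‖x - q x‖⁻¹ : ℝ) • (x - q x)) (by rw [map_smul, hker, smul_zero]) ?_
  exact norm_smul_inv_norm (𝕜 := ℝ) hne

omit hq hq₁ in
variable (A) in
theorem lIrreducible : LIrreducible A := fun q hq => by
  rcases isLprojection_apply_one hq with h | h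
  · refine .inl (sub_eq_self.1 (isLprojection_eq_one hq.Lcomplement ?_))
    rw [LinearMap.sub_apply, h, sub_zero, Module.End.one_apply]
  · exact .inr (isLprojection_eq_one hq h)

end UniformAlgebra

end LProjectionUniformAlgebra

section HInf

open BoundedContinuousFunction WeakDual

lemma exists_bound_dslope {E : Type*} [NormedAddCommGroup E] [NormedSpace ℂ E] [CompleteSpace E]
    {F : ℂ → E} {U : Set ℂ} (hU : IsOpen U) (hF : DifferentiableOn ℂ F U) {p : ℂ} (hp : p ∈ U)
    {M : ℝ} (hM : ∀ z ∈ U, ‖F z‖ ≤ M) : ∃ C : ℝ, ∀ z ∈ U, ‖dslope F p z‖ ≤ C := by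
  obtain ⟨r, hr, hrU⟩ := Metric.nhds_basis_closedBall.mem_iff.1 (hU.mem_nhds hp)
  have hcont : ContinuousOn (dslope F p) (closedBall p r) :=
    ((Complex.differentiableOn_dslope (hU.mem_nhds hp)).2 hF).continuousOn.mono hrU
  obtain ⟨C, hC⟩ := (isCompact_closedBall p r).exists_bound_of_continuousOn hcont
  refine ⟨max C ((M + M) / r), fun z hz => ?_⟩
  rcases le_or_gt (dist z p) r with hzr | hzr
  · exact (hC z hzr).trans (le_max_left _ _)
  · refine le_max_of_le_right ((le_div_iff₀ hr).2 ?_)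
    calc ‖dslope F p z‖ * r ≤ ‖z - p‖ * ‖dslope F p z‖ := by
          rw [mul_comm, ← dist_eq_norm]
          gcongr
      _ = ‖F z - F p‖ := by rw [← norm_smul, sub_smul_dslope]
      _ ≤ M + M := (norm_sub_le _ _).trans (add_le_add (hM z hz) (hM p hp))

/-- The Hardy algebra `H^∞(𝔻)` of bounded analytic functions on the unit disc. -/
def HInf : Subalgebra ℂ (ball (0 : ℂ) 1 →ᵇ ℂ) where
  carrier := {f | ∃ F : ℂ → ℂ, DifferentiableOn ℂ F (ball 0 1) ∧ ∀ w : ball (0 : ℂ) 1, F w = f w}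
  mul_mem' := by
    rintro f g ⟨F, hF, hFf⟩ ⟨G, hG, hGg⟩
    exact ⟨F * G, hF.mul hG, fun w => congrArg₂ (· * ·) (hFf w) (hGg w)⟩
  add_mem' := by
    rintro f g ⟨F, hF, hFf⟩ ⟨G, hG, hGg⟩
    exact ⟨F + G, hF.add hG, fun w => congrArg₂ (· + ·) (hFf w) (hGg w)⟩
  algebraMap_mem' c := ⟨fun _ => c, differentiableOn_const c, fun _ => rfl⟩

namespace HInf

/-- The element of `H^∞(𝔻)` given by a bounded analytic function. -/
noncomputable def mk (F : ℂ → ℂ) (hF : DifferentiableOn ℂ F (ball 0 1))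
    (hbdd : ∃ M : ℝ, ∀ z ∈ ball (0 : ℂ) 1, ‖F z‖ ≤ M) : HInf :=
  ⟨ofNormedAddCommGroup (fun w : ball (0 : ℂ) 1 => F w)
    (continuousOn_iff_continuous_domRestrict.1 hF.continuousOn) hbdd.choose
    fun w => hbdd.choose_spec w w.2, F, hF, fun _ => rfl⟩

/-- The coordinate function `z ↦ z`. -/
noncomputable def coord : HInf :=
  mk id differentiableOn_id ⟨1, fun _ hz => (mem_ball_zero_iff.1 hz).le⟩

lemma coord_apply (w : ball (0 : ℂ) 1) : coord.1 w = w := rfl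

lemma smul_one_apply (c : ℂ) (w : ball (0 : ℂ) 1) : (c • (1 : HInf)).1 w = c := mul_one c

@[ext] lemma ext {f g : HInf} (h : ∀ w, f.1 w = g.1 w) : f = g :=
  Subtype.ext (BoundedContinuousFunction.ext h)

lemma norm_apply_le (f : HInf) (w : ball (0 : ℂ) 1) : ‖f.1 w‖ ≤ ‖f‖ := f.1.norm_coe_le_norm w

instance : Nonempty (ball (0 : ℂ) 1) := ⟨0, mem_ball_self one_pos⟩

lemma norm_coord_le : ‖coord‖ ≤ 1 :=
  (norm_le zero_le_one).2 fun w => (mem_ball_zero_iff.1 w.2).le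

lemma coord_ne_smul_one (c : ℂ) : coord ≠ c • 1 := fun h => by
  have hconst : ∀ w : ball (0 : ℂ) 1, (w : ℂ) = c := fun w => by
    rw [← coord_apply, h, smul_one_apply]
  have hzero := hconst ⟨0, mem_ball_self one_pos⟩
  have hhalf := hconst ⟨1 / 2, by norm_num⟩
  norm_num [← hzero] at hhalf

lemma coord_ne_zero : coord ≠ 0 := fun h => coord_ne_smul_one 0 (h.trans (zero_smul ℂ 1).symm)

instance : Nontrivial HInf := ⟨coord, 0, coord_ne_zero⟩

lemma not_isUnit_coord : ¬IsUnit coord := fun h => by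
  obtain ⟨g, hg⟩ := h.exists_right_inv
  have hzero : coord.1 ⟨0, mem_ball_self one_pos⟩ * g.1 ⟨0, mem_ball_self one_pos⟩ = 1 :=
    congrArg (fun f : HInf => f.1 ⟨0, mem_ball_self one_pos⟩) hg
  rw [coord_apply, zero_mul] at hzero
  exact zero_ne_one hzero

lemma isClosed : IsClosed (HInf : Set (ball (0 : ℂ) 1 →ᵇ ℂ)) := by
  refine IsSeqClosed.isClosed fun f g hf hfg => ?_
  choose F hF hFf using hf
  let G : ℂ → ℂ := Function.extend Subtype.val g 0
  have hG : ∀ w : ball (0 : ℂ) 1, G w = g w := Subtype.val_injective.extend_apply _ _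
  have hlim : TendstoUniformlyOn F G Filter.atTop (ball 0 1) := by
    rw [tendstoUniformlyOn_iff_tendstoUniformly_comp_coe]
    simpa only [Function.comp_def, hFf, hG] using tendsto_iff_tendstoUniformly.1 hfg
  exact ⟨G, hlim.tendstoLocallyUniformlyOn.differentiableOn (.of_forall hF) isOpen_ball, hG⟩

instance : UniformAlgebra HInf where
  toCompleteSpace := isClosed.completeSpace_coe
  norm_pow_eq f n := by
    have hnorm : ∀ g : HInf, ‖g‖ = ⨆ w, ‖g.1 w‖ := fun g => g.1.norm_eq_iSup_norm
    rw [hnorm, hnorm, Real.iSup_pow fun w => norm_nonneg _]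
    exact iSup_congr fun w => norm_pow (f.1 w) n

-- Instance search otherwise diverges in `SubringClass.toNormOneClass`.
instance : NormOneClass HInf := UniformAlgebra.instNormOneClass

instance : NoZeroDivisors HInf where
  eq_zero_or_eq_zero_of_mul_eq_zero {f g} hfg := by
    obtain ⟨F, hF, hFf⟩ := f.2
    obtain ⟨G, hG, hGg⟩ := g.2
    have hFG : ∀ z ∈ ball (0 : ℂ) 1, F z * G z = 0 := fun z hz =>
      (congrArg₂ (· * ·) (hFf ⟨z, hz⟩) (hGg ⟨z, hz⟩)).trans
        (congrArg (fun h : HInf => h.1 ⟨z, hz⟩) hfg)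
    refine ((hF.analyticOnNhd isOpen_ball).eq_zero_or_eq_zero_of_mul_eq_zero
      (hG.analyticOnNhd isOpen_ball) hFG (convex_ball 0 1).isPreconnected).imp
      (fun h => ?_) fun h => ?_
    · exact ext fun w => (hFf w).symm.trans (h w w.2)
    · exact ext fun w => (hGg w).symm.trans (h w w.2)

/-- Evaluation at a point of the disc, as a character. -/
noncomputable def eval (w : ball (0 : ℂ) 1) : characterSpace ℂ HInf :=
  CharacterSpace.equivAlgHom.symm
    (((ContinuousMap.evalAlgHom ℂ ℂ w).comp (toContinuousMapₐ ℂ)).comp HInf.val)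

lemma eq_smul_one_of_norm_le {f : HInf} {w : ball (0 : ℂ) 1} (h : ‖f‖ ≤ ‖f.1 w‖) :
    f = f.1 w • 1 := by
  obtain ⟨F, hF, hFf⟩ := f.2
  have hmax : IsMaxOn (norm ∘ F) (ball 0 1) w := fun z hz => by
    rw [mem_ofPred_eq, Function.comp_apply, Function.comp_apply, hFf w, hFf ⟨z, hz⟩]
    exact (norm_apply_le f _).trans h
  refine ext fun v => ?_
  rw [smul_one_apply, ← hFf, ← hFf]
  exact Complex.eqOn_of_isPreconnected_of_isMaxOn_norm (convex_ball 0 1).isPreconnected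
    isOpen_ball hF w.2 hmax v.2

lemma exists_sub_smul_one_eq_mul (g : HInf) (p : ball (0 : ℂ) 1) :
    ∃ q : HInf, g - g.1 p • 1 = (coord - (p : ℂ) • 1) * q := by
  obtain ⟨F, hF, hFg⟩ := g.2
  have hslope : DifferentiableOn ℂ (dslope F p) (ball 0 1) :=
    (Complex.differentiableOn_dslope (isOpen_ball.mem_nhds p.2)).2 hF
  have hbdd := exists_bound_dslope isOpen_ball hF p.2 (M := ‖g‖) fun z hz => by
    rw [hFg ⟨z, hz⟩]
    exact norm_apply_le g _
  refine ⟨mk (dslope F p) hslope hbdd, ext fun w => ?_⟩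
  have hdiv : (w - p : ℂ) * dslope F p w = F w - F p := sub_smul_dslope F p w
  calc (g - g.1 p • 1).1 w = g.1 w - (g.1 p • (1 : HInf)).1 w := rfl
    _ = (w - p : ℂ) * dslope F p w := by rw [smul_one_apply, hdiv, hFg, hFg]
    _ = (coord.1 w - ((p : ℂ) • (1 : HInf)).1 w) * dslope F p w := by
      rw [smul_one_apply, coord_apply]

end HInf

end HInf

section DiscAutomorphism

/-- The Möbius involution of the unit disc that exchanges `0` and `b`. -/
noncomputable def discInvolution (b z : ℂ) : ℂ := (z - b) / (starRingEnd ℂ b * z - 1)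

lemma discInvolution_zero (b : ℂ) : discInvolution b 0 = b := by simp [discInvolution]

section

variable {b z : ℂ} (hb : b ∈ ball (0 : ℂ) 1)
include hb

lemma conj_mul_sub_one_ne_zero (hz : z ∈ ball (0 : ℂ) 1) : starRingEnd ℂ b * z - 1 ≠ 0 := by
  rw [mem_ball_zero_iff] at hb hz
  refine fun h => (mul_lt_one_of_nonneg_of_lt_one_left (norm_nonneg b) hb hz.le).ne ?_
  rw [← RCLike.norm_conj b, ← norm_mul, sub_eq_zero.1 h, norm_one]

lemma discInvolution_mem_ball (hz : z ∈ ball (0 : ℂ) 1) :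
    discInvolution b z ∈ ball (0 : ℂ) 1 := by
  have hne := conj_mul_sub_one_ne_zero hb hz
  have hid : ‖starRingEnd ℂ b * z - 1‖ ^ 2 - ‖z - b‖ ^ 2 = (1 - ‖z‖ ^ 2) * (1 - ‖b‖ ^ 2) := by
    simp only [Complex.sq_norm, normSq_apply, sub_re, sub_im, mul_re, mul_im, conj_re, conj_im,
      one_re, one_im]
    ring
  rw [mem_ball_zero_iff] at hb hz ⊢
  have hpos : 0 < (1 - ‖z‖ ^ 2) * (1 - ‖b‖ ^ 2) :=
    mul_pos (by nlinarith [norm_nonneg z]) (by nlinarith [norm_nonneg b])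
  rw [discInvolution, norm_div, div_lt_one (norm_pos_iff.2 hne)]
  exact lt_of_pow_lt_pow_left₀ 2 (norm_nonneg _) (by linarith)

lemma mapsTo_discInvolution : MapsTo (discInvolution b) (ball 0 1) (ball 0 1) :=
  fun _ => discInvolution_mem_ball hb

lemma discInvolution_discInvolution (hz : z ∈ ball (0 : ℂ) 1) :
    discInvolution b (discInvolution b z) = z := by
  have hcancel : discInvolution b z * (starRingEnd ℂ b * z - 1) = z - b :=
    div_mul_cancel₀ _ (conj_mul_sub_one_ne_zero hb hz)
  rw [discInvolution.eq_def b (discInvolution b z),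
    div_eq_iff (conj_mul_sub_one_ne_zero hb (discInvolution_mem_ball hb hz))]
  linear_combination -hcancel

lemma differentiableOn_discInvolution : DifferentiableOn ℂ (discInvolution b) (ball 0 1) :=
  (differentiableOn_id.sub_const b).div ((differentiableOn_id.const_mul _).sub_const 1)
    fun _ hz => conj_mul_sub_one_ne_zero hb hz

end

lemma exists_eqOn_mul_of_norm_eq {F : ℂ → ℂ} (hF : DifferentiableOn ℂ F (ball 0 1))
    (hmaps : MapsTo F (ball 0 1) (ball 0 1)) (hzero : F 0 = 0) {w : ℂ}
    (hw : w ∈ ball (0 : ℂ) 1) (hne : w ≠ 0) (hnorm : ‖F w‖ = ‖w‖) :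
    ∃ c : ℂ, ‖c‖ = 1 ∧ EqOn F (c * ·) (ball 0 1) := by
  have hslope : ‖dslope F 0 w‖ = 1 := by
    rw [dslope_of_ne _ hne, slope_def_field, hzero, sub_zero, sub_zero, norm_div, hnorm,
      div_self (norm_ne_zero_iff.2 hne)]
  refine ⟨dslope F 0 w, hslope, fun z hz => ?_⟩
  have hmaps' : MapsTo F (ball 0 1) (closedBall (F 0) 1) := by
    rw [hzero]
    exact hmaps.mono_right ball_subset_closedBall
  have haffine := Complex.affine_of_mapsTo_ball_of_norm_dslope_eq_div hF hmaps' hw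
    (by rw [hslope, div_one]) hz
  simpa [hzero, mul_comm] using haffine

lemma exists_eqOn_mul_of_leftInvOn {F G : ℂ → ℂ} (hF : DifferentiableOn ℂ F (ball 0 1))
    (hG : DifferentiableOn ℂ G (ball 0 1)) (hFmaps : MapsTo F (ball 0 1) (ball 0 1))
    (hGmaps : MapsTo G (ball 0 1) (ball 0 1)) (hFzero : F 0 = 0)
    (hGF : LeftInvOn G F (ball 0 1)) : ∃ c : ℂ, ‖c‖ = 1 ∧ EqOn F (c * ·) (ball 0 1) := by
  have hhalf : (1 / 2 : ℂ) ∈ ball (0 : ℂ) 1 := by norm_num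
  have hGzero : G 0 = 0 := by simpa only [hFzero] using hGF (mem_ball_self one_pos)
  refine exists_eqOn_mul_of_norm_eq hF hFmaps hFzero hhalf (by norm_num) (le_antisymm ?_ ?_)
  · exact Complex.norm_le_norm_of_mapsTo_ball hF (hFmaps.mono_right ball_subset_closedBall) hFzero
      (mem_ball_zero_iff.1 hhalf)
  · simpa only [hGF hhalf] using Complex.norm_le_norm_of_mapsTo_ball hG
      (hGmaps.mono_right ball_subset_closedBall) hGzero (mem_ball_zero_iff.1 (hFmaps hhalf))

theorem exists_eqOn_mul_discInvolution {ρ σ : ℂ → ℂ} (hρ : DifferentiableOn ℂ ρ (ball 0 1))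
    (hσ : DifferentiableOn ℂ σ (ball 0 1)) (hρmaps : MapsTo ρ (ball 0 1) (ball 0 1))
    (hσmaps : MapsTo σ (ball 0 1) (ball 0 1)) (hinv : InvOn σ ρ (ball 0 1) (ball 0 1)) :
    ∃ lam : ℂ, ‖lam‖ = 1 ∧ ∃ b ∈ ball (0 : ℂ) 1,
      EqOn ρ (fun z => lam * discInvolution b z) (ball 0 1) := by
  have hb : σ 0 ∈ ball (0 : ℂ) 1 := hσmaps (mem_ball_self one_pos)
  have hmaps := mapsTo_discInvolution hb
  have hdiff := differentiableOn_discInvolution hb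
  obtain ⟨lam, hlam, heq⟩ := exists_eqOn_mul_of_leftInvOn (hρ.comp hdiff hmaps)
    (hdiff.comp hσ hσmaps) (hρmaps.comp hmaps) (hmaps.comp hσmaps)
    (by rw [Function.comp_apply, discInvolution_zero, hinv.2 (mem_ball_self one_pos)])
    (LeftInvOn.comp (fun _ => discInvolution_discInvolution hb) hinv.1 hmaps)
  refine ⟨lam, hlam, σ 0, hb, fun z hz => ?_⟩
  have hz' := heq (hmaps hz)
  rwa [Function.comp_apply, discInvolution_discInvolution hb hz] at hz'

end DiscAutomorphism

section RealAlgHom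

lemma exists_eq_mul_algHom (V : ℂ ≃ₗᵢ[ℝ] ℂ) :
    ∃ (c : Circle) (τ : ℂ →ₐ[ℝ] ℂ), ∀ z, V z = c * τ z := by
  obtain ⟨c, rfl | rfl⟩ := linear_isometry_complex V
  · exact ⟨c, AlgHom.id ℝ ℂ, fun z => rfl⟩
  · exact ⟨c, conjAe, fun z => rfl⟩

variable (τ : ℂ →ₐ[ℝ] ℂ)

lemma algHom_algHom_apply (z : ℂ) : τ (τ z) = z := by
  rcases real_algHom_eq_id_or_conj τ with rfl | rfl
  · rfl
  · exact conj_conj z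

lemma norm_algHom_apply (z : ℂ) : ‖τ z‖ = ‖z‖ := by
  rcases real_algHom_eq_id_or_conj τ with rfl | rfl
  · rfl
  · exact norm_conj z

lemma algHom_apply_mem_ball {z : ℂ} {r : ℝ} (hz : z ∈ ball 0 r) : τ z ∈ ball 0 r := by
  rwa [mem_ball_zero_iff, norm_algHom_apply, ← mem_ball_zero_iff]

lemma differentiableOn_algHom_comp_comp {F : ℂ → ℂ} {r : ℝ}
    (hF : DifferentiableOn ℂ F (ball 0 r)) : DifferentiableOn ℂ (τ ∘ F ∘ τ) (ball 0 r) := by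
  intro z hz
  have hFz := hF.differentiableAt (isOpen_ball.mem_nhds (algHom_apply_mem_ball τ hz))
  refine DifferentiableAt.differentiableWithinAt ?_
  rcases real_algHom_eq_id_or_conj τ with rfl | rfl
  · exact hFz
  · exact differentiableAt_conj_conj_iff.2 hFz

end RealAlgHom

section HInfIsometry

instance : UniformAlgebra ℂ where
  norm_pow_eq := norm_pow

namespace HInf

lemma isEmpty_linearIsometryEquiv : IsEmpty (ℂ ≃ₗᵢ[ℝ] HInf) := by
  refine ⟨fun e => not_isUnit_coord ?_⟩
  rw [← e.apply_symm_apply coord]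
  refine UniformAlgebra.isUnit_map e (isUnit_iff_ne_zero.2 ?_)
  exact (map_ne_zero_iff _ e.symm.injective).2 coord_ne_zero

section Unital

variable {S : HInf ≃ₗᵢ[ℝ] HInf} {τ : ℂ →ₐ[ℝ] ℂ} (hS : S 1 = 1)
  (hτ : ∀ (c : ℂ) f, S (c • f) = τ c • S f)

include hτ in
lemma symm_map_smul (c : ℂ) (f : HInf) : S.symm (c • f) = τ c • S.symm f := by
  rw [S.symm_apply_eq, hτ, S.apply_symm_apply, algHom_algHom_apply]

include hS hτ

lemma map_smul_one (c : ℂ) : S (c • 1) = τ c • 1 := by rw [hτ, hS]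

lemma map_coord_mem_ball (w : ball (0 : ℂ) 1) : (S coord).1 w ∈ ball (0 : ℂ) 1 := by
  by_contra hw
  have hle : ‖S coord‖ ≤ ‖(S coord).1 w‖ := by
    rw [S.norm_map]
    exact norm_coord_le.trans (not_lt.1 (mem_ball_zero_iff.not.1 hw))
  refine coord_ne_smul_one (τ ((S coord).1 w)) (S.injective ?_)
  rw [map_smul_one hS hτ, algHom_algHom_apply]
  exact eq_smul_one_of_norm_le hle

-- `S` maps the multiples of `coord - p` to the multiples of `S coord - τ p`, which vanish at `w`
-- for `p = τ (S coord w)`.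
lemma map_apply (g : HInf) (w : ball (0 : ℂ) 1) : (S g).1 w =
    τ (g.1 ⟨τ ((S coord).1 w), algHom_apply_mem_ball τ (map_coord_mem_ball hS hτ w)⟩) := by
  set p : ball (0 : ℂ) 1 :=
    ⟨τ ((S coord).1 w), algHom_apply_mem_ball τ (map_coord_mem_ball hS hτ w)⟩
  obtain ⟨q, hq⟩ := exists_sub_smul_one_eq_mul g p
  have hmap : S g - τ (g.1 p) • 1 = (S coord - (S coord).1 w • 1) * S q := by
    rw [← map_smul_one hS hτ, ← map_sub, hq, UniformAlgebra.map_mul_of_map_one_eq_one hS, map_sub,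
      map_smul_one hS hτ, algHom_algHom_apply]
  have hw : (S g).1 w - (τ (g.1 p) • (1 : HInf)).1 w =
      ((S coord).1 w - ((S coord).1 w • (1 : HInf)).1 w) * (S q).1 w :=
    congrArg (fun f : HInf => f.1 w) hmap
  rw [smul_one_apply, smul_one_apply, sub_self, zero_mul] at hw
  exact sub_eq_zero.1 hw

lemma exists_map_coord_eq : ∃ lam : ℂ, ‖lam‖ = 1 ∧ ∃ b ∈ ball (0 : ℂ) 1,
    ∀ w, (S coord).1 w = lam * discInvolution b w := by
  have hS' : S.symm 1 = 1 := S.symm_apply_eq.2 hS.symm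
  have hτ' := symm_map_smul hτ
  obtain ⟨F, hF, hFS⟩ := (S coord).2
  obtain ⟨G, hG, hGS⟩ := (S.symm coord).2
  have hFmaps : MapsTo F (ball 0 1) (ball 0 1) := fun z hz =>
    hFS ⟨z, hz⟩ ▸ map_coord_mem_ball hS hτ ⟨z, hz⟩
  have hGmaps : MapsTo G (ball 0 1) (ball 0 1) := fun z hz =>
    hGS ⟨z, hz⟩ ▸ map_coord_mem_ball hS' hτ' ⟨z, hz⟩
  have hτmaps : MapsTo τ (ball 0 1) (ball 0 1) := fun _ => algHom_apply_mem_ball τ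
  have hGF : ∀ z ∈ ball (0 : ℂ) 1, τ (G (τ (F z))) = z := fun z hz => by
    have hz' := (map_apply hS hτ (S.symm coord) ⟨z, hz⟩).symm
    simpa only [S.apply_symm_apply, coord_apply, ← hGS, ← hFS] using hz'
  have hFG : ∀ z ∈ ball (0 : ℂ) 1, τ (F (τ (G z))) = z := fun z hz => by
    have hz' := (map_apply hS' hτ' (S coord) ⟨z, hz⟩).symm
    simpa only [S.symm_apply_apply, coord_apply, ← hGS, ← hFS] using hz'
  obtain ⟨lam, hlam, b, hb, heq⟩ := exists_eqOn_mul_discInvolution hF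
    (differentiableOn_algHom_comp_comp τ hG) hFmaps (hτmaps.comp (hGmaps.comp hτmaps))
    ⟨hGF, fun z hz => by
      rw [← algHom_algHom_apply τ (F _), Function.comp_apply, Function.comp_apply,
        hFG _ (hτmaps hz), algHom_algHom_apply]⟩
  exact ⟨lam, hlam, b, hb, fun w => (hFS w).symm.trans (heq w.2)⟩

end Unital

lemma exists_map_one_eq (R : HInf ≃ₗᵢ[ℝ] HInf) : ∃ c : Circle, R 1 = c • 1 := by
  have hnorm : ‖(R 1).1 ⟨0, mem_ball_self one_pos⟩‖ = 1 :=
    UniformAlgebra.norm_character_map_one R (eval ⟨0, mem_ball_self one_pos⟩)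
  refine ⟨⟨_, mem_sphere_zero_iff_norm.2 hnorm⟩, eq_smul_one_of_norm_le ?_⟩
  rw [R.norm_map, norm_one, hnorm]

theorem exists_eq_mul_algHom_apply (R : HInf ≃ₗᵢ[ℝ] HInf) :
    ∃ (c : Circle) (τ : ℂ →ₐ[ℝ] ℂ) (lam : ℂ), ‖lam‖ = 1 ∧ ∃ b ∈ ball (0 : ℂ) 1,
      ∃ p : ball (0 : ℂ) 1 → ball (0 : ℂ) 1, (∀ w, (p w : ℂ) = τ (lam * discInvolution b w)) ∧
        ∀ g w, (R g).1 w = c * τ (g.1 (p w)) := by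
  obtain ⟨c, hc⟩ := exists_map_one_eq R
  let S : HInf ≃ₗᵢ[ℝ] HInf := R.trans (UniformAlgebra.circleSMul c⁻¹)
  have hS : S 1 = 1 := (congrArg (c⁻¹ • ·) hc).trans (inv_smul_smul c 1)
  obtain ⟨τ, hτ⟩ := UniformAlgebra.exists_algHom_map_smul hS
  obtain ⟨lam, hlam, b, hb, hcoord⟩ := exists_map_coord_eq hS hτ
  refine ⟨c, τ, lam, hlam, b, hb,
    fun w => ⟨_, algHom_apply_mem_ball τ (map_coord_mem_ball hS hτ w)⟩,
    fun w => congrArg τ (hcoord w), fun g w => ?_⟩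
  calc (R g).1 w = (c • S g).1 w := by rw [show c • S g = R g from smul_inv_smul c (R g)]
    _ = c * (S g).1 w := rfl
    _ = _ := by rw [map_apply hS hτ]

end HInf

end HInfIsometry

section MazurUlam

variable {X E F : Type*} [NormedAddCommGroup E] [NormedSpace ℝ E] [NormedAddCommGroup F]
  [NormedSpace ℝ F]

lemma exists_linearIsometryEquiv_sub_eq {Φ : X → E} {Ψ : X → F} (hΦ : Function.Surjective Φ)
    (hΨ : Function.Surjective Ψ) (hdist : ∀ x y, ‖Ψ x - Ψ y‖ = ‖Φ x - Φ y‖) {o : X}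
    (ho : Φ o = 0) : ∃ U : E ≃ₗᵢ[ℝ] F, ∀ x, Ψ x - Ψ o = U (Φ x) := by
  obtain ⟨s, hs⟩ := hΦ.hasRightInverse
  have hfactor : ∀ x, Ψ (s (Φ x)) = Ψ x := fun x => by
    rw [← sub_eq_zero, ← norm_eq_zero, hdist, hs, sub_self, norm_zero]
  have hiso : Isometry (Ψ ∘ s) := Isometry.of_dist_eq fun x y => by
    rw [dist_eq_norm, dist_eq_norm, Function.comp_apply, Function.comp_apply, hdist, hs, hs]
  have hsurj : Function.Surjective (Ψ ∘ s) := fun y => by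
    obtain ⟨x, rfl⟩ := hΨ y
    exact ⟨Φ x, hfactor x⟩
  let e : E ≃ᵢ F := ⟨Equiv.ofBijective (Ψ ∘ s) ⟨hiso.injective, hsurj⟩, hiso⟩
  refine ⟨e.toRealLinearIsometryEquiv, fun x => ?_⟩
  calc Ψ x - Ψ o = Ψ (s (Φ x)) - Ψ (s (Φ o)) := by rw [hfactor, hfactor]
    _ = e (Φ x) - e 0 := by rw [ho]; rfl
    _ = _ := (e.toRealLinearIsometryEquiv_apply _).symm

end MazurUlam

section LineIntegral

variable {s : Set ℂ} {a z : ℂ} (hs : Convex ℝ s) (ha : a ∈ s) (hz : z ∈ s)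
include hs ha hz

lemma lineInt_congr {g h : ℂ → ℂ} (hgh : EqOn g h s) : lineInt g a z = lineInt h a z := by
  refine intervalIntegral.integral_congr fun t ht => congrArg (· * (z - a)) (hgh ?_)
  rw [uIcc_of_le zero_le_one] at ht
  rw [← Complex.real_smul]
  exact hs.add_smul_sub_mem ha hz ht

lemma lineInt_deriv {F : ℂ → ℂ} (hs' : IsOpen s) (hF : DifferentiableOn ℂ F s) :
    lineInt (deriv F) a z = F z - F a := by
  have hmem : ∀ t ∈ Icc (0 : ℝ) 1, a + t • (z - a) ∈ s := fun t ht =>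
    hs.add_smul_sub_mem ha hz ht
  have hcont : ContinuousOn (fun t : ℝ => deriv F (a + t • (z - a))) (Icc 0 1) :=
    (hF.deriv hs').continuousOn.comp (by fun_prop) hmem
  have hftc := intervalIntegral.integral_unitInterval_deriv_eq_sub hcont fun t ht =>
    (hF.differentiableAt (hs'.mem_nhds (hmem t ht))).hasDerivAt
  rw [add_sub_cancel, smul_eq_mul] at hftc
  rw [lineInt, intervalIntegral.integral_mul_const, mul_comm, ← hftc]
  simp only [Complex.real_smul]

end LineIntegral

section Jet

open WithLp

lemma memSInf_zero : MemSInf 0 :=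
  ⟨differentiableOn_const 0, 0, fun z _ => by simp⟩

namespace MemSInf

variable {f g : ℂ → ℂ}

/-- The derivative of a function in `𝒮^∞`, as an element of `H^∞(𝔻)`. -/
noncomputable def derivHInf (hf : MemSInf f) : HInf :=
  HInf.mk (deriv f) (hf.1.deriv isOpen_ball) hf.2

/-- The pair `(f(a), f')`; it identifies `𝒮^∞` with the `ℓ¹`-sum of `ℂ` and `H^∞(𝔻)`. -/
noncomputable def jet (hf : MemSInf f) (a : ℂ) : WithLp 1 (ℂ × HInf) :=
  toLp 1 (f a, hf.derivHInf)

lemma differentiableAt (hf : MemSInf f) {z : ℂ} (hz : z ∈ ball (0 : ℂ) 1) :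
    DifferentiableAt ℂ f z :=
  hf.1.differentiableAt (isOpen_ball.mem_nhds hz)

lemma derivHInf_sub_apply (hf : MemSInf f) (hg : MemSInf g) (w : ball (0 : ℂ) 1) :
    (hf.derivHInf - hg.derivHInf).1 w = deriv (f - g) w :=
  (deriv_sub (hf.differentiableAt w.2) (hg.differentiableAt w.2)).symm

lemma norm_jet_sub_jet (hf : MemSInf f) (hg : MemSInf g) (a : ℂ) :
    ‖hf.jet a - hg.jet a‖ = normSigmaA a (f - g) := by
  have hnorm : ‖hf.derivHInf - hg.derivHInf‖ = ⨆ w, ‖(hf.derivHInf - hg.derivHInf).1 w‖ :=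
    (hf.derivHInf - hg.derivHInf).1.norm_eq_iSup_norm
  rw [WithLp.prod_norm_eq_of_L1, normSigmaA]
  simp only [← derivHInf_sub_apply hf hg, ← hnorm]
  rfl

lemma jet_zero (a : ℂ) : memSInf_zero.jet a = 0 := by
  have hderiv : memSInf_zero.derivHInf = 0 := HInf.ext fun w => deriv_const (w : ℂ) 0
  rw [jet, hderiv]
  rfl

lemma jet_congr (hf : MemSInf f) (hg : MemSInf g) {a : ℂ} (ha : a ∈ ball (0 : ℂ) 1)
    (hfg : EqOn f g (ball 0 1)) : hf.jet a = hg.jet a := by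
  have hderiv : hf.derivHInf = hg.derivHInf := HInf.ext fun w => hfg.deriv isOpen_ball w.2
  rw [jet, jet, hderiv, hfg ha]

lemma exists_jet_eq (a : ℂ) (x : WithLp 1 (ℂ × HInf)) : ∃ f, ∃ hf : MemSInf f, hf.jet a = x := by
  obtain ⟨F, hF, hFx⟩ := x.snd.2
  obtain ⟨f, hfa, hfF⟩ := hF.isExactOn_ball.with_val_at a x.fst
  have hderiv : ∀ w : ball (0 : ℂ) 1, deriv f w = x.snd.1 w := fun w =>
    (hfF w w.2).deriv.trans (hFx w)
  have hf : MemSInf f :=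
    ⟨fun z hz => (hfF z hz).differentiableAt.differentiableWithinAt, ‖x.snd‖, fun z hz =>
      (congrArg norm (hderiv ⟨z, hz⟩)).trans_le (HInf.norm_apply_le x.snd ⟨z, hz⟩)⟩
  refine ⟨f, hf, ?_⟩
  rw [jet, hfa, show hf.derivHInf = x.snd from HInf.ext hderiv]
  rfl

lemma eq_add_lineInt_of_jet_sub_jet_eq (hf : MemSInf f) (hg : MemSInf g) {a z c : ℂ} {h : HInf}
    {k : ℂ → ℂ} (ha : a ∈ ball (0 : ℂ) 1) (hz : z ∈ ball (0 : ℂ) 1)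
    (hk : ∀ w : ball (0 : ℂ) 1, h.1 w = k w) (hfg : hf.jet a - hg.jet a = toLp 1 (c, h)) :
    f z = g z + c + lineInt k a z := by
  have hfst : f a - g a = c := congrArg WithLp.fst hfg
  have hsnd : hf.derivHInf - hg.derivHInf = h := congrArg WithLp.snd hfg
  have hball := convex_ball (0 : ℂ) 1
  have hderiv : EqOn k (deriv (f - g)) (ball 0 1) := fun w hw => by
    rw [← hk ⟨w, hw⟩, ← hsnd, derivHInf_sub_apply]
  rw [lineInt_congr hball ha hz hderiv, lineInt_deriv hball ha hz isOpen_ball (hf.1.sub hg.1),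
    Pi.sub_apply, Pi.sub_apply, ← hfst]
  ring

end MemSInf

lemma exists_linearIsometryEquiv_jet {a : ℂ} (ha : a ∈ ball (0 : ℂ) 1) {T : (ℂ → ℂ) → (ℂ → ℂ)}
    (hmap : ∀ f, MemSInf f → MemSInf (T f))
    (hsurj : ∀ g, MemSInf g → ∃ f, MemSInf f ∧ EqOn (T f) g (ball (0 : ℂ) 1))
    (hiso : ∀ f g, MemSInf f → MemSInf g →
      normSigmaA a (T f - T g) = normSigmaA a (f - g)) :
    ∃ U : WithLp 1 (ℂ × HInf) ≃ₗᵢ[ℝ] WithLp 1 (ℂ × HInf), ∀ f (hf : MemSInf f),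
      (hmap f hf).jet a - (hmap 0 memSInf_zero).jet a = U (hf.jet a) := by
  let Φ : {f // MemSInf f} → WithLp 1 (ℂ × HInf) := fun f => f.2.jet a
  let Ψ : {f // MemSInf f} → WithLp 1 (ℂ × HInf) := fun f => (hmap f.1 f.2).jet a
  have hΦ : Function.Surjective Φ := fun x => by
    obtain ⟨f, hf, hfx⟩ := MemSInf.exists_jet_eq a x
    exact ⟨⟨f, hf⟩, hfx⟩
  have hΨ : Function.Surjective Ψ := fun x => by
    obtain ⟨g, hg, hgx⟩ := MemSInf.exists_jet_eq a x
    obtain ⟨f, hf, hfg⟩ := hsurj g hg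
    exact ⟨⟨f, hf⟩, ((hmap f hf).jet_congr hg ha hfg).trans hgx⟩
  obtain ⟨U, hU⟩ := exists_linearIsometryEquiv_sub_eq hΦ hΨ (o := ⟨0, memSInf_zero⟩)
    (fun f g => by rw [MemSInf.norm_jet_sub_jet, MemSInf.norm_jet_sub_jet, hiso _ _ f.2 g.2])
    (MemSInf.jet_zero a)
  exact ⟨U, fun f hf => hU ⟨f, hf⟩⟩

end Jet

theorem surjective_isometry_normSigmaA
    (a : ℂ) (ha : a ∈ ball (0 : ℂ) 1)
    (T : (ℂ → ℂ) → (ℂ → ℂ))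
    (hmap : ∀ f, MemSInf f → MemSInf (T f))
    (hsurj : ∀ g, MemSInf g → ∃ f, MemSInf f ∧ Set.EqOn (T f) g (ball (0 : ℂ) 1))
    (hiso : ∀ f g, MemSInf f → MemSInf g →
      normSigmaA a (T f - T g) = normSigmaA a (f - g)) :
    ∃ c₀ c₁ lam : ℂ, ‖c₀‖ = 1 ∧ ‖c₁‖ = 1 ∧ ‖lam‖ = 1 ∧ ∃ b ∈ ball (0 : ℂ) 1,
      ∃ ρ : ℂ → ℂ, (∀ z, ρ z = lam * (z - b) / ((starRingEnd ℂ) b * z - 1)) ∧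
      ((∀ f, MemSInf f → ∀ z ∈ ball (0 : ℂ) 1,
          T f z = T 0 z + c₀ * f a + lineInt (fun ζ => c₁ * deriv f (ρ ζ)) a z) ∨
       (∀ f, MemSInf f → ∀ z ∈ ball (0 : ℂ) 1,
          T f z = T 0 z + c₀ * (starRingEnd ℂ) (f a)
            + lineInt (fun ζ => c₁ * deriv f (ρ ζ)) a z) ∨
       (∀ f, MemSInf f → ∀ z ∈ ball (0 : ℂ) 1,
          T f z = T 0 z + c₀ * f a
            + lineInt (fun ζ => c₁ * (starRingEnd ℂ) (deriv f ((starRingEnd ℂ) (ρ ζ)))) a z) ∨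
       (∀ f, MemSInf f → ∀ z ∈ ball (0 : ℂ) 1,
          T f z = T 0 z + c₀ * (starRingEnd ℂ) (f a)
            + lineInt (fun ζ => c₁ * (starRingEnd ℂ) (deriv f ((starRingEnd ℂ) (ρ ζ)))) a z)) := by
  obtain ⟨U, hU⟩ := exists_linearIsometryEquiv_jet ha hmap hsurj hiso
  obtain ⟨V, W, hVW⟩ := LIrreducible.of_strictConvexSpace.exists_map_toLp_eq
    (UniformAlgebra.lIrreducible HInf) HInf.isEmpty_linearIsometryEquiv U
  obtain ⟨c₀, τ₀, hV⟩ := exists_eq_mul_algHom V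
  obtain ⟨c₁, τ, lam, hlam, b, hb, p, hp, hW⟩ := HInf.exists_eq_mul_algHom_apply W
  let ρ : ℂ → ℂ := fun z => lam * discInvolution b z
  have hT : ∀ f, MemSInf f → ∀ z ∈ ball (0 : ℂ) 1,
      T f z = T 0 z + c₀ * τ₀ (f a) + lineInt (fun ζ => c₁ * τ (deriv f (τ (ρ ζ)))) a z :=
    fun f hf z hz => by
      rw [← hV]
      refine (hmap f hf).eq_add_lineInt_of_jet_sub_jet_eq (hmap 0 memSInf_zero) ha hz
        (fun w => ?_) ((hU f hf).trans (hVW _ _))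
      rw [hW, ← hp]
      rfl
  refine ⟨c₀, c₁, lam, c₀.norm_coe, c₁.norm_coe, hlam, b, hb, ρ,
    fun z => (mul_div_assoc _ _ _).symm, ?_⟩
  rcases real_algHom_eq_id_or_conj τ₀ with rfl | rfl <;>
    rcases real_algHom_eq_id_or_conj τ with rfl | rfl
  exacts [.inl hT, .inr (.inr (.inl hT)), .inr (.inl hT), .inr (.inr (.inr hT))]
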